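/- arXiv:2502.06622 — 2 statements merged into one kernel-verified Lean document; each statement's English description precedes it below -/
import Mathlib

section
/- Let ε > 0, let Φ : ℝ⁴ → ℂ be differentiable at a point x with Φ(x) ≠ 0, and let A, U ∈ ℝ⁴ be real four-vectors (values at x). With D_αΦ = ε ∂_αΦ + i A_α Φ, J_α = −Im(Φ · conj(D_αΦ)) and ρ = |Φ|², the following identity holds at x (all sums Euclidean over α = 0,1,2,3): Σ_α |D_αΦ − i U_α Φ|² / 2 = ε² Σ_α (∂_α|Φ|)² / 2 + Σ_α (J_α − ρ U_α)² / (2ρ). -/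
open ComplexConjugate

noncomputable def pd (f : (Fin 4 → ℝ) → ℂ) (α : Fin 4) (x : Fin 4 → ℝ) : ℂ :=
  fderiv ℝ f x (Pi.single α 1)

noncomputable def pdR (f : (Fin 4 → ℝ) → ℝ) (α : Fin 4) (x : Fin 4 → ℝ) : ℝ :=
  fderiv ℝ f x (Pi.single α 1)

/-! For complex numbers, `|Φ|²|w|² = (Re (Φ w̄))² + (Im (Φ w̄))²`. With `w = DΦ` the real part is
`ε|Φ| ∂|Φ|`, because the potential only contributes to `DΦ` a real multiple of `iΦ`, and the
imaginary part is `-J`. This gives the identity for `U = 0`; the general case is the same identity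
for the potential `A - U`, which turns `DΦ` into `DΦ - iUΦ` and `J` into `J - ρU`. -/

section CovariantDerivative

variable {E : Type*} [NormedAddCommGroup E] [NormedSpace ℝ E]

/-- The gauge-covariant derivative `ε ∂_v Φ + i a Φ` of a wave function `Φ` at `x` in the
direction `v`. Only the value `a` at `x` of the component of the potential along `v` enters, so it
is passed as a number. -/
noncomputable def covDeriv (ε a : ℝ) (Φ : E → ℂ) (x v : E) : ℂ :=
  (ε : ℂ) * fderiv ℝ Φ x v + Complex.I * (a : ℂ) * Φ x

/-- The momentum `J = -Im (Φ · conj (DΦ))` of a wave function `Φ` at `x` in the direction `v`,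
where `a` is the component of the potential along `v` at `x`, as in `covDeriv`. -/
noncomputable def momentum (ε a : ℝ) (Φ : E → ℂ) (x v : E) : ℝ :=
  -(Φ x * conj (covDeriv ε a Φ x v)).im

theorem covDeriv_sub_potential (ε a u : ℝ) (Φ : E → ℂ) (x v : E) :
    covDeriv ε (a - u) Φ x v = covDeriv ε a Φ x v - Complex.I * (u : ℂ) * Φ x := by
  simp only [covDeriv, Complex.ofReal_sub]
  ring

theorem momentum_sub_potential (ε a u : ℝ) (Φ : E → ℂ) (x v : E) :
    momentum ε (a - u) Φ x v = momentum ε a Φ x v - ‖Φ x‖ ^ 2 * u := by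
  have h_mul_conj : Φ x * conj (covDeriv ε a Φ x v - Complex.I * (u : ℂ) * Φ x) =
      Φ x * conj (covDeriv ε a Φ x v) + ((‖Φ x‖ ^ 2 * u : ℝ) : ℂ) * Complex.I := by
    push_cast
    simp only [← Complex.mul_conj', map_sub, map_mul, Complex.conj_I, Complex.conj_ofReal]
    ring
  rw [momentum, momentum, covDeriv_sub_potential, h_mul_conj, Complex.add_im,
    Complex.im_ofReal_mul, Complex.I_im, mul_one, neg_add']

theorem norm_mul_fderiv_norm_apply {F : Type*} [NormedAddCommGroup F] [InnerProductSpace ℝ F]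
    {f : E → F} {x : E} (hf : DifferentiableAt ℝ f x) (hfx : f x ≠ 0) (v : E) :
    ‖f x‖ * fderiv ℝ (fun y => ‖f y‖) x v = inner ℝ (f x) (fderiv ℝ f x v) := by
  have h_pow := (hf.norm ℝ hfx).hasFDerivAt.pow 2
  have h_inner := hf.hasFDerivAt.norm_sq
  have h_eq := DFunLike.congr_fun (h_pow.unique h_inner) v
  simp only [Nat.add_one_sub_one, pow_one, nsmul_eq_mul, Nat.cast_ofNat, smul_apply, smul_eq_mul,
    ContinuousLinearMap.comp_apply, coe_innerSL_apply] at h_eq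
  linarith

theorem re_mul_conj_covDeriv (ε a : ℝ) {Φ : E → ℂ} {x : E} (hΦ : DifferentiableAt ℝ Φ x)
    (hne : Φ x ≠ 0) (v : E) :
    (Φ x * conj (covDeriv ε a Φ x v)).re = ε * (‖Φ x‖ * fderiv ℝ (fun y => ‖Φ y‖) x v) := by
  have h_mul_conj : Φ x * conj (covDeriv ε a Φ x v) =
      (ε : ℂ) * (Φ x * conj (fderiv ℝ Φ x v)) - ((a * ‖Φ x‖ ^ 2 : ℝ) : ℂ) * Complex.I := by
    push_cast
    simp only [covDeriv, ← Complex.mul_conj', map_add, map_mul, Complex.conj_I,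
      Complex.conj_ofReal]
    ring
  rw [norm_mul_fderiv_norm_apply hΦ hne, real_inner_comm, Complex.inner, h_mul_conj,
    Complex.sub_re, Complex.re_ofReal_mul, Complex.re_ofReal_mul, Complex.I_re, mul_zero, sub_zero]

theorem norm_sq_covDeriv (ε a : ℝ) {Φ : E → ℂ} {x : E} (hΦ : DifferentiableAt ℝ Φ x)
    (hne : Φ x ≠ 0) (v : E) :
    ‖covDeriv ε a Φ x v‖ ^ 2 =
      ε ^ 2 * fderiv ℝ (fun y => ‖Φ y‖) x v ^ 2 + momentum ε a Φ x v ^ 2 / ‖Φ x‖ ^ 2 := by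
  have h_norm : ‖Φ x‖ ≠ 0 := norm_ne_zero_iff.mpr hne
  have h_split : ‖Φ x‖ ^ 2 * ‖covDeriv ε a Φ x v‖ ^ 2 =
      (ε * (‖Φ x‖ * fderiv ℝ (fun y => ‖Φ y‖) x v)) ^ 2 + momentum ε a Φ x v ^ 2 := by
    rw [← re_mul_conj_covDeriv ε a hΦ hne, momentum, neg_sq, ← Complex.sq_norm_sub_sq_re,
      add_sub_cancel, norm_mul, Complex.norm_conj, mul_pow]
  field_simp
  linear_combination h_split

theorem stmt10_general {ι : Type*} [Fintype ι] (ε : ℝ) {Φ : E → ℂ} {x : E}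
    (hΦ : DifferentiableAt ℝ Φ x) (hne : Φ x ≠ 0) (e : ι → E) (A U : ι → ℝ) :
    (∑ α, ‖covDeriv ε (A α) Φ x (e α) - Complex.I * (U α : ℂ) * Φ x‖ ^ 2) / 2 =
      ε ^ 2 * (∑ α, fderiv ℝ (fun y => ‖Φ y‖) x (e α) ^ 2) / 2
      + (∑ α, (momentum ε (A α) Φ x (e α) - ‖Φ x‖ ^ 2 * U α) ^ 2) / (2 * ‖Φ x‖ ^ 2) := by
  simp only [← covDeriv_sub_potential, ← momentum_sub_potential, norm_sq_covDeriv _ _ hΦ hne]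
  rw [Finset.sum_add_distrib, ← Finset.mul_sum, ← Finset.sum_div, add_div, div_div,
    mul_comm (‖Φ x‖ ^ 2)]

end CovariantDerivative

/-- Identity (6.2) of Proposition 6.2: the kinetic part of the modulated energy density,
`Σ_α |D_αΦ − iU_αΦ|²/2 = ε² Σ_α (∂_α√ρ)²/2 + Σ_α (J_α − ρU_α)²/(2ρ)`. -/
theorem stmt10 (ε : ℝ) (hε : 0 < ε)
    (Φ : (Fin 4 → ℝ) → ℂ) (x : Fin 4 → ℝ)
    (hΦ : DifferentiableAt ℝ Φ x) (hne : Φ x ≠ 0)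
    (A U : Fin 4 → ℝ)
    (D : Fin 4 → ℂ) (hD : ∀ α, D α = (ε : ℂ) * pd Φ α x + Complex.I * (A α : ℂ) * Φ x)
    (J : Fin 4 → ℝ) (hJ : ∀ α, J α = - (Φ x * conj (D α)).im)
    (ρ : ℝ) (hρ : ρ = ‖Φ x‖ ^ 2) :
    (∑ α : Fin 4, ‖D α - Complex.I * (U α : ℂ) * Φ x‖ ^ 2) / 2 =
      ε ^ 2 * (∑ α : Fin 4, (pdR (fun y => ‖Φ y‖) α x) ^ 2) / 2
      + (∑ α : Fin 4, (J α - ρ * U α) ^ 2) / (2 * ρ) := by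
  rw [hρ, funext hJ, funext hD]
  exact stmt10_general ε hΦ hne (fun α => Pi.single α 1) A U
end

section
/- Let ω : ℝ⁴ → ℝ be C², A : ℝ⁴ → ℝ⁴ be C¹ and Ψ : ℝ⁴ → ℂ be C¹. Define U_α = ∂_αω + A_α, F_{αβ} = ∂_αA_β − ∂_βA_α, ρ = |Ψ|², and raised components U^α = η_αU_α (η₀ = −1, ηᵢ = 1). Assume on ℝ⁴ the transport equation 2 Σ_α U^α ∂_αΨ + (Σ_α ∂_αU^α) Ψ = 0 and the eikonal equation Σ_α U^α U_α = −1. Then (U, F, ρ) satisfies on ℝ⁴: (i) the continuity equation Σ_α U^α ∂_α ρ + (Σ_α ∂_αU^α) ρ = 0, and (ii) for each β, the pressureless Euler equation Σ_α U^α ∂_α U_β = Σ_α U^α F_{αβ}. In particular, together with the Maxwell equation ∇_αF^{αβ} = U^βρ of the WKB system, (U, F, ρ) is a solution of the relativistic Euler–Maxwell system. -/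
open ComplexConjugate

/-- The Minkowski signs: `η₀ = −1`, `ηᵢ = 1`. -/
noncomputable def eta : Fin 4 → ℝ := fun α => if α = 0 then -1 else 1

/-!
Pairing the transport equation with `Ψ` in the real inner product turns `2 ∂Ψ` into `∂|Ψ|²` and
gives continuity. For the Euler equation, `dU = d(dω + A) = dA = F`, and contracting `dU` with the
raised field `U^α` gives `U^α ∂_α U_β − ½ ∂_β(U^α U_α)`, whose last term vanishes because the
eikonal equation makes `U^α U_α` constant.
-/

section

variable {E G H ι : Type*} [NormedAddCommGroup E] [NormedSpace ℝ E]
  [NormedAddCommGroup G] [NormedSpace ℝ G] [NormedAddCommGroup H] [InnerProductSpace ℝ H]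

/-- The components `∂_α U_β − ∂_β U_α` of the exterior derivative of a covector field with
components `U`, where `∂_α` is the derivative along the constant vector field `e α`, for an
arbitrary family `e` of vectors; it plays the part of the field strength of a potential. -/
noncomputable def curl (e : ι → E) (U : ι → E → ℝ) (α β : ι) (x : E) : ℝ :=
  fderiv ℝ (U β) x (e α) - fderiv ℝ (U α) x (e β)

theorem differentiableAt_fderiv_of_contDiffAt {f : E → G} {x : E} (hf : ContDiffAt ℝ 2 f x) :
    DifferentiableAt ℝ (fderiv ℝ f) x :=
  (hf.fderiv_right (m := 1) (by norm_num)).differentiableAt one_ne_zero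

theorem differentiableAt_fderiv_apply {f : E → G} {x : E} (hf : ContDiffAt ℝ 2 f x) (v : E) :
    DifferentiableAt ℝ (fun y ↦ fderiv ℝ f y v) x :=
  (differentiableAt_fderiv_of_contDiffAt hf).clm_apply (differentiableAt_const v)

theorem fderiv_fderiv_apply_comm {f : E → G} {x : E} (hf : ContDiffAt ℝ 2 f x) (v w : E) :
    fderiv ℝ (fun y ↦ fderiv ℝ f y v) x w = fderiv ℝ (fun y ↦ fderiv ℝ f y w) x v := by
  have hsymm : IsSymmSndFDerivAt ℝ f x := hf.isSymmSndFDerivAt (by simp)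
  simpa [fderiv_clm_apply (differentiableAt_fderiv_of_contDiffAt hf)
    (differentiableAt_const _)] using hsymm w v

theorem curl_fderiv_add {ω : E → ℝ} {A : ι → E → ℝ} {x : E} (e : ι → E)
    (hω : ContDiffAt ℝ 2 ω x) (hA : ∀ α, DifferentiableAt ℝ (A α) x) (α β : ι) :
    curl e (fun γ y ↦ fderiv ℝ ω y (e γ) + A γ y) α β x = curl e A α β x := by
  have hadd (γ : ι) := fderiv_fun_add (differentiableAt_fderiv_apply hω (e γ)) (hA γ)
  simp only [curl, hadd, add_apply, fderiv_fderiv_apply_comm hω (e β) (e α)]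
  ring

variable [Fintype ι]

theorem fderiv_sum_mul_mul_self {U : ι → E → ℝ} {x : E} (η : ι → ℝ)
    (hU : ∀ α, DifferentiableAt ℝ (U α) x) (v : E) :
    fderiv ℝ (fun y ↦ ∑ α, η α * U α y * U α y) x v
      = 2 * ∑ α, η α * U α x * fderiv ℝ (U α) x v := by
  have hterm (α : ι) : HasFDerivAt (fun y ↦ η α * U α y * U α y) _ x :=
    ((hU α).hasFDerivAt.const_mul (η α)).mul (hU α).hasFDerivAt
  rw [(HasFDerivAt.fun_sum fun α _ ↦ hterm α).fderiv, sum_apply, Finset.mul_sum]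
  refine Finset.sum_congr rfl fun α _ ↦ ?_
  simp only [add_apply, smul_apply, smul_eq_mul]
  ring

theorem sum_mul_curl {U : ι → E → ℝ} {x : E} (e : ι → E) (η : ι → ℝ)
    (hU : ∀ α, DifferentiableAt ℝ (U α) x) (β : ι) :
    ∑ α, η α * U α x * curl e U α β x
      = ∑ α, η α * U α x * fderiv ℝ (U β) x (e α)
        - 1 / 2 * fderiv ℝ (fun y ↦ ∑ α, η α * U α y * U α y) x (e β) := by
  simp only [fderiv_sum_mul_mul_self η hU, curl, mul_sub, Finset.sum_sub_distrib]
  ring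

theorem fderiv_norm_sq_add_eq_zero_of_transport {Ψ : E → H} {x v : E} {d : ℝ}
    (hΨ : DifferentiableAt ℝ Ψ x) (htransport : (2 : ℝ) • fderiv ℝ Ψ x v + d • Ψ x = 0) :
    fderiv ℝ (fun y ↦ ‖Ψ y‖ ^ 2) x v + d * ‖Ψ x‖ ^ 2 = 0 := by
  calc fderiv ℝ (fun y ↦ ‖Ψ y‖ ^ 2) x v + d * ‖Ψ x‖ ^ 2
      = inner ℝ (Ψ x) ((2 : ℝ) • fderiv ℝ Ψ x v + d • Ψ x) := by
        simp [hΨ.hasFDerivAt.norm_sq.fderiv, inner_add_right, inner_smul_right]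
    _ = 0 := by rw [htransport, inner_zero_right]

theorem stmt12_general (e : ι → E) (η : ι → ℝ) (c : ℝ)
    {ω : E → ℝ} (hω : ContDiff ℝ 2 ω)
    {A : ι → E → ℝ} (hA : ∀ α, Differentiable ℝ (A α))
    {Ψ : E → H} (hΨ : Differentiable ℝ Ψ)
    {U : ι → E → ℝ} (hU : ∀ α x, U α x = fderiv ℝ ω x (e α) + A α x)
    {F : ι → ι → E → ℝ} (hF : ∀ α β x, F α β x = curl e A α β x)
    {ρ : E → ℝ} (hρ : ∀ x, ρ x = ‖Ψ x‖ ^ 2)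
    (htransport : ∀ x, (2 : ℝ) • (∑ α, (η α * U α x) • fderiv ℝ Ψ x (e α))
      + (∑ α, η α * fderiv ℝ (U α) x (e α)) • Ψ x = 0)
    (heikonal : ∀ x, ∑ α, η α * U α x * U α x = c) :
    (∀ x, (∑ α, η α * U α x * fderiv ℝ ρ x (e α))
      + (∑ α, η α * fderiv ℝ (U α) x (e α)) * ρ x = 0) ∧
    (∀ β x, ∑ α, η α * U α x * fderiv ℝ (U β) x (e α) = ∑ α, η α * U α x * F α β x) := by
  refine ⟨fun x ↦ ?_, fun β x ↦ ?_⟩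
  · obtain rfl : ρ = fun y ↦ ‖Ψ y‖ ^ 2 := funext hρ
    simpa only [map_sum, map_smul, smul_eq_mul] using
      fderiv_norm_sq_add_eq_zero_of_transport (v := ∑ α, (η α * U α x) • e α) (hΨ x)
        (by simpa only [map_sum, map_smul] using htransport x)
  · have hU_eq : U = fun α y ↦ fderiv ℝ ω y (e α) + A α y := funext₂ hU
    have hU_diff (α : ι) : DifferentiableAt ℝ (U α) x := by
      rw [hU_eq]
      exact (differentiableAt_fderiv_apply hω.contDiffAt (e α)).add (hA α x)
    have hcurl (α : ι) : curl e U α β x = F α β x := by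
      rw [hU_eq, hF]
      exact curl_fderiv_add e hω.contDiffAt (fun γ ↦ hA γ x) α β
    have hgrad : fderiv ℝ (fun y ↦ ∑ α, η α * U α y * U α y) x (e β) = 0 := by
      simp [heikonal]
    simpa only [hgrad, hcurl, mul_zero, sub_zero] using (sum_mul_curl e η hU_diff β).symm

end

/-- Proposition A.2: from the WKB transport and eikonal equations for `(ω, Ψ, A)`, the
triple `(U, F, ρ) = (∇ω + A, dA, |Ψ|²)` satisfies the continuity equation and the
pressureless Euler equation of the relativistic Euler-Maxwell system. -/
theorem stmt12 (ω : (Fin 4 → ℝ) → ℝ) (hω : ContDiff ℝ 2 ω)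
    (A : (Fin 4 → ℝ) → Fin 4 → ℝ) (hA : ContDiff ℝ 1 A)
    (Ψ : (Fin 4 → ℝ) → ℂ) (hΨ : ContDiff ℝ 1 Ψ)
    (U : Fin 4 → (Fin 4 → ℝ) → ℝ) (hU : ∀ α x, U α x = pdR ω α x + A x α)
    (F : Fin 4 → Fin 4 → (Fin 4 → ℝ) → ℝ)
    (hF : ∀ (α β : Fin 4) x,
      F α β x = pdR (fun y => A y β) α x - pdR (fun y => A y α) β x)
    (ρ : (Fin 4 → ℝ) → ℝ) (hρ : ∀ x, ρ x = ‖Ψ x‖ ^ 2)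
    (htransport : ∀ x, 2 * (∑ α : Fin 4, ((eta α * U α x : ℝ) : ℂ) * pd Ψ α x)
        + (((∑ α : Fin 4, eta α * pdR (U α) α x : ℝ)) : ℂ) * Ψ x = 0)
    (heikonal : ∀ x, ∑ α : Fin 4, eta α * U α x * U α x = -1) :
    (∀ x, (∑ α : Fin 4, eta α * U α x * pdR ρ α x)
        + (∑ α : Fin 4, eta α * pdR (U α) α x) * ρ x = 0) ∧
    (∀ (β : Fin 4) x, ∑ α : Fin 4, eta α * U α x * pdR (U β) α x
        = ∑ α : Fin 4, eta α * U α x * F α β x) := by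
  exact stmt12_general (fun α ↦ Pi.single α 1) eta (-1) hω
    (fun α ↦ differentiable_pi.1 (hA.differentiable one_ne_zero) α)
    (hΨ.differentiable one_ne_zero) hU hF hρ
    (fun x ↦ by simpa only [Complex.real_smul, Complex.ofReal_ofNat, pd, pdR] using htransport x)
    heikonal
end
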